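/- Let L be a set closed under binary operations ∧, ∨, → and a unary operation ¬, and let C : 2^L → 2^L satisfy Inclusion, Idempotence, Cautious Monotonicity, and the rules: C(A ∪ {a ∧ b}) = C(A ∪ {a, b}); C(A ∪ {a, ¬a}) = L; C(A ∪ {¬a}) = L implies a ∈ C(A); C(A ∪ {a}) ∩ C(A ∪ {b}) ⊆ C(A ∪ {a ∨ b}); a ∈ C(A) implies a ∨ b ∈ C(A), and b ∈ C(A) implies a ∨ b ∈ C(A); b ∈ C(A ∪ {a}) implies a → b ∈ C(A); b ∈ C(A ∪ {a, a → b}). Then every maximal consistent set A satisfies: (1) A = C(A); (2) a ∧ b ∈ A iff a ∈ A and b ∈ A; (3) ¬a ∈ A iff a ∉ A; (4) a ∨ b ∈ A iff a ∈ A or b ∈ A; (5) a → b ∉ A iff a ∈ A and b ∉ A. -/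

import Mathlib

/-!
If `A` is maximal consistent then `C (A ∪ S)` takes only two values: it is `C A = A` when `S ⊆ A`,
and the whole language otherwise. Under this dichotomy the introduction and elimination rules of a
connective, read at `A`, become the rows of its truth table.
-/

open Set

/-- Consistency of a set of formulas for a consequence operation `C`: not everything follows. -/
def IsConsistent {L : Type*} (C : Set L → Set L) (A : Set L) : Prop :=
  C A ≠ univ

/-- Maximal consistency for a consequence operation `C`, as maximality under inclusion among the
consistent sets. Consistency need not pass to subsets, but the order-theoretic notion still says
that every strict superset is inconsistent. -/
def IsMaximalConsistent {L : Type*} (C : Set L → Set L) (A : Set L) : Prop :=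
  Maximal (IsConsistent C) A

theorem isMaximalConsistent_iff {L : Type*} {C : Set L → Set L} {A : Set L} :
    IsMaximalConsistent C A ↔ C A ≠ univ ∧ ∀ B, A ⊂ B → C B = univ := by
  simp only [IsMaximalConsistent, maximal_iff_forall_gt, IsConsistent, not_not]

namespace IsMaximalConsistent

variable {L : Type*} {C : Set L → Set L} {A : Set L}

theorem apply_eq_self (hA : IsMaximalConsistent C A) (hIncl : A ⊆ C A) (hIdem : C (C A) = C A) :
    C A = A := by
  have hCA : IsConsistent C (C A) := fun h => hA.prop (hIdem.symm.trans h)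
  exact (hA.eq_of_subset hCA hIncl).symm

theorem apply_union_eq_univ_iff (hA : IsMaximalConsistent C A) {S : Set L} :
    C (A ∪ S) = univ ↔ ¬S ⊆ A := by
  constructor
  · intro hS hSA
    rw [union_eq_self_of_subset_right hSA] at hS
    exact hA.prop hS
  · intro hSA
    exact (isMaximalConsistent_iff.1 hA).2 _ (ssubset_union_left_iff.2 hSA)

theorem apply_union_singleton_eq_univ_iff (hA : IsMaximalConsistent C A) {a : L} :
    C (A ∪ {a}) = univ ↔ a ∉ A := by
  rw [hA.apply_union_eq_univ_iff, singleton_subset_iff]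

theorem mem_apply_union_iff (hA : IsMaximalConsistent C A) (hfix : C A = A) {S : Set L} {b : L} :
    b ∈ C (A ∪ S) ↔ (S ⊆ A → b ∈ A) := by
  by_cases hSA : S ⊆ A
  · simp only [union_eq_self_of_subset_right hSA, hfix, hSA, true_imp_iff]
  · simp only [hA.apply_union_eq_univ_iff.2 hSA, mem_univ, hSA, false_imp_iff]

theorem conj_mem_iff (hA : IsMaximalConsistent C A) {conj : L → L → L}
    (hAnd : ∀ a b, C (A ∪ {conj a b}) = C (A ∪ {a, b})) (a b : L) :
    conj a b ∈ A ↔ a ∈ A ∧ b ∈ A := by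
  rw [← not_iff_not, ← hA.apply_union_singleton_eq_univ_iff, hAnd, hA.apply_union_eq_univ_iff,
    pair_subset_iff]

theorem neg_mem_iff (hA : IsMaximalConsistent C A) (hfix : C A = A) {neg : L → L}
    (hNegI : ∀ a, C (A ∪ {a, neg a}) = univ) (hNegE : ∀ a, C (A ∪ {neg a}) = univ → a ∈ C A)
    (a : L) : neg a ∈ A ↔ a ∉ A := by
  constructor
  · intro hneg ha
    exact hA.apply_union_eq_univ_iff.1 (hNegI a) (pair_subset ha hneg)
  · intro ha
    by_contra hneg
    have haC : a ∈ C A := hNegE a (hA.apply_union_singleton_eq_univ_iff.2 hneg)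
    exact ha (hfix ▸ haC)

theorem disj_mem_iff (hA : IsMaximalConsistent C A) (hfix : C A = A) {disj : L → L → L}
    (hOrL : ∀ a b, C (A ∪ {a}) ∩ C (A ∪ {b}) ⊆ C (A ∪ {disj a b}))
    (hOrR₁ : ∀ a b, a ∈ C A → disj a b ∈ C A) (hOrR₂ : ∀ a b, b ∈ C A → disj a b ∈ C A)
    (a b : L) : disj a b ∈ A ↔ a ∈ A ∨ b ∈ A := by
  rw [hfix] at hOrR₁ hOrR₂
  constructor
  · contrapose!
    rintro ⟨ha, hb⟩
    have h := hOrL a b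
    rw [hA.apply_union_singleton_eq_univ_iff.2 ha, hA.apply_union_singleton_eq_univ_iff.2 hb,
      univ_inter, univ_subset_iff] at h
    exact hA.apply_union_singleton_eq_univ_iff.1 h
  · exact Or.rec (hOrR₁ a b) (hOrR₂ a b)

theorem impl_mem_iff (hA : IsMaximalConsistent C A) (hfix : C A = A) {impl : L → L → L}
    (hImpR : ∀ a b, b ∈ C (A ∪ {a}) → impl a b ∈ C A)
    (hImpL : ∀ a b, b ∈ C (A ∪ {a, impl a b})) (a b : L) :
    impl a b ∈ A ↔ (a ∈ A → b ∈ A) := by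
  constructor
  · intro himpl ha
    exact (hA.mem_apply_union_iff hfix).1 (hImpL a b) (pair_subset ha himpl)
  · intro hab
    have hb : b ∈ C (A ∪ {a}) :=
      (hA.mem_apply_union_iff hfix).2 fun ha => hab (singleton_subset_iff.1 ha)
    exact hfix ▸ hImpR a b hb

end IsMaximalConsistent

theorem stmt_17_general {L : Type*} {conj disj impl : L → L → L} {neg : L → L}
    {C : Set L → Set L} {A : Set L} (hA : IsMaximalConsistent C A)
    (hIncl : A ⊆ C A)
    (hIdem : C (C A) = C A)
    (hAnd : ∀ a b, C (A ∪ {conj a b}) = C (A ∪ {a, b}))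
    (hNegI : ∀ a, C (A ∪ {a, neg a}) = univ)
    (hNegE : ∀ a, C (A ∪ {neg a}) = univ → a ∈ C A)
    (hOrL : ∀ a b, C (A ∪ {a}) ∩ C (A ∪ {b}) ⊆ C (A ∪ {disj a b}))
    (hOrR₁ : ∀ a b, a ∈ C A → disj a b ∈ C A)
    (hOrR₂ : ∀ a b, b ∈ C A → disj a b ∈ C A)
    (hImpR : ∀ a b, b ∈ C (A ∪ {a}) → impl a b ∈ C A)
    (hImpL : ∀ a b, b ∈ C (A ∪ {a, impl a b})) :
    A = C A ∧
      (∀ a b, conj a b ∈ A ↔ a ∈ A ∧ b ∈ A) ∧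
      (∀ a, neg a ∈ A ↔ a ∉ A) ∧
      (∀ a b, disj a b ∈ A ↔ a ∈ A ∨ b ∈ A) ∧
      (∀ a b, impl a b ∉ A ↔ a ∈ A ∧ b ∉ A) := by
  have hfix : C A = A := hA.apply_eq_self hIncl hIdem
  refine ⟨hfix.symm, hA.conj_mem_iff hAnd, hA.neg_mem_iff hfix hNegI hNegE,
    hA.disj_mem_iff hfix hOrL hOrR₁ hOrR₂, fun a b => ?_⟩
  rw [hA.impl_mem_iff hfix hImpR hImpL, Classical.not_imp]

/-- Every maximal consistent set is a theory and decides the connectives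
classically, given the Introduction-Elimination rules. -/
theorem stmt_17 {L : Type}
    (conj disj impl : L → L → L) (neg : L → L)
    (C : Set L → Set L)
    (hIncl : ∀ A : Set L, A ⊆ C A)
    (hIdem : ∀ A : Set L, C (C A) = C A)
    (hCM : ∀ A B : Set L, A ⊆ B → B ⊆ C A → C A ⊆ C B)
    (hAnd : ∀ (A : Set L) (a b : L), C (A ∪ {conj a b}) = C (A ∪ {a, b}))
    (hNegI : ∀ (A : Set L) (a : L), C (A ∪ {a, neg a}) = Set.univ)
    (hNegE : ∀ (A : Set L) (a : L), C (A ∪ {neg a}) = Set.univ → a ∈ C A)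
    (hOrL : ∀ (A : Set L) (a b : L),
      C (A ∪ {a}) ∩ C (A ∪ {b}) ⊆ C (A ∪ {disj a b}))
    (hOrR₁ : ∀ (A : Set L) (a b : L), a ∈ C A → disj a b ∈ C A)
    (hOrR₂ : ∀ (A : Set L) (a b : L), b ∈ C A → disj a b ∈ C A)
    (hImpR : ∀ (A : Set L) (a b : L), b ∈ C (A ∪ {a}) → impl a b ∈ C A)
    (hImpL : ∀ (A : Set L) (a b : L), b ∈ C (A ∪ {a, impl a b})) :
    ∀ A : Set L,
      (C A ≠ Set.univ ∧ ∀ B : Set L, A ⊂ B → C B = Set.univ) →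
      (A = C A ∧
       (∀ a b : L, conj a b ∈ A ↔ a ∈ A ∧ b ∈ A) ∧
       (∀ a : L, neg a ∈ A ↔ a ∉ A) ∧
       (∀ a b : L, disj a b ∈ A ↔ a ∈ A ∨ b ∈ A) ∧
       (∀ a b : L, impl a b ∉ A ↔ a ∈ A ∧ b ∉ A)) :=
  fun A hA => stmt_17_general (isMaximalConsistent_iff.2 hA) (hIncl A) (hIdem A) (hAnd A)
    (hNegI A) (hNegE A) (hOrL A) (hOrR₁ A) (hOrR₂ A) (hImpR A) (hImpL A)
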